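/- Let n, p ≥ 1, let r_1, …, r_p ∈ ℂⁿ be arbitrary vectors, and let z ∈ ℂ with Im z > 0. Set D = ∑_{j=1}^p r_j r_j* − z·I_n and, for each j, D_j = D − r_j r_j*. Then D and every D_j are invertible, each denominator 1 + r_j*·D_j^{-1}·r_j is nonzero, and the Stieltjes-transform identity (1/p)·tr( (Y*Y − z·I_p)^{-1} ) = −(1/(pz))·∑_{j=1}^p 1/(1 + r_j*·D_j^{-1}·r_j) holds, where Y = (r_1, …, r_p) is the n×p matrix with columns r_j. -/

import Mathlib

open Matrix BigOperators

/-- `D = ∑_j r_j r_j* − z I_n`. -/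
noncomputable def Dmat (n p : ℕ) (r : Fin p → Fin n → ℂ) (z : ℂ) :
    Matrix (Fin n) (Fin n) ℂ :=
  (∑ j : Fin p, Matrix.vecMulVec (r j) (star (r j))) - z • 1

/-- `D_j = D − r_j r_j*`. -/
noncomputable def Djmat (n p : ℕ) (r : Fin p → Fin n → ℂ) (z : ℂ) (j : Fin p) :
    Matrix (Fin n) (Fin n) ℂ :=
  Dmat n p r z - Matrix.vecMulVec (r j) (star (r j))

/-- The quadratic form `r_j* D_j⁻¹ r_j`. -/
noncomputable def quadRD (n p : ℕ) (r : Fin p → Fin n → ℂ) (z : ℂ) (j : Fin p) : ℂ :=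
  ∑ s : Fin n, ∑ t : Fin n,
    (starRingEnd ℂ) (r j s) * ((Djmat n p r z j)⁻¹ s t) * r j t

/-- The `n × p` matrix `Y` with columns `r_1, …, r_p`. -/
def Ymat (n p : ℕ) (r : Fin p → Fin n → ℂ) : Matrix (Fin n) (Fin p) ℂ :=
  Matrix.of fun s j => r j s

open scoped ComplexOrder in
lemma isUnit_sub_smul_of_isHermitian {m : ℕ} (M : Matrix (Fin m) (Fin m) ℂ)
    (hM : M.IsHermitian) (z : ℂ) (hz : 0 < z.im) : IsUnit (M - z • 1) := by
  rw [← Matrix.mulVec_injective_iff_isUnit]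
  refine (injective_iff_map_eq_zero (Matrix.mulVecLin (M - z • 1))).2 ?_
  intro v hv
  have hv' : M *ᵥ v = z • v := by
    have h : (M - z • 1) *ᵥ v = 0 := hv
    rw [Matrix.sub_mulVec, Matrix.smul_mulVec, Matrix.one_mulVec] at h
    exact sub_eq_zero.1 h
  have h1 : star v ⬝ᵥ (M *ᵥ v) = z * (star v ⬝ᵥ v) := by
    rw [hv', dotProduct_smul, smul_eq_mul]
  have h2 : star (star v ⬝ᵥ (M *ᵥ v)) = star v ⬝ᵥ (M *ᵥ v) := by
    rw [← star_dotProduct, star_mulVec, hM.eq, ← dotProduct_mulVec]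
  have h3 : star (star v ⬝ᵥ v) = star v ⬝ᵥ v := by
    rw [← star_dotProduct]
  rw [h1, star_mul', h3] at h2
  by_contra hne
  have h4 : star v ⬝ᵥ v ≠ 0 := fun h => hne (dotProduct_star_self_eq_zero.1 (by
    exact h))
  have h5 := congrArg Complex.im (mul_right_cancel₀ h4 h2)
  simp at h5
  linarith

lemma isHermitian_vecMulVec_star {m : ℕ} (v : Fin m → ℂ) :
    (Matrix.vecMulVec v (star v)).IsHermitian := by
  rw [Matrix.IsHermitian, Matrix.conjTranspose_vecMulVec, star_star]

lemma isHermitian_sum_vecMulVec {n p : ℕ} (r : Fin p → Fin n → ℂ) :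
    (∑ j : Fin p, Matrix.vecMulVec (r j) (star (r j))).IsHermitian := by
  rw [Matrix.IsHermitian, Matrix.conjTranspose_sum]
  exact Finset.sum_congr rfl fun j _ => isHermitian_vecMulVec_star (r j)

lemma isUnit_Dmat (n p : ℕ) (r : Fin p → Fin n → ℂ) (z : ℂ) (hz : 0 < z.im) :
    IsUnit (Dmat n p r z) :=
  isUnit_sub_smul_of_isHermitian _ (isHermitian_sum_vecMulVec r) z hz

lemma isUnit_Djmat (n p : ℕ) (r : Fin p → Fin n → ℂ) (z : ℂ) (hz : 0 < z.im) (j : Fin p) :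
    IsUnit (Djmat n p r z j) := by
  have h := isUnit_sub_smul_of_isHermitian _
    ((isHermitian_sum_vecMulVec r).sub (isHermitian_vecMulVec_star (r j))) z hz
  rw [Djmat, Dmat, sub_right_comm]
  exact h

lemma quadRD_eq (n p : ℕ) (r : Fin p → Fin n → ℂ) (z : ℂ) (j : Fin p) :
    quadRD n p r z j = star (r j) ⬝ᵥ ((Djmat n p r z j)⁻¹ *ᵥ r j) := by
  simp [quadRD, dotProduct, Matrix.mulVec, Finset.mul_sum, mul_assoc]

lemma key_mul (n p : ℕ) (r : Fin p → Fin n → ℂ) (z : ℂ) (hz : 0 < z.im) (j : Fin p) :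
    (1 - star (r j) ⬝ᵥ ((Dmat n p r z)⁻¹ *ᵥ r j)) * (1 + quadRD n p r z j) = 1 := by
  have hD := (Matrix.isUnit_iff_isUnit_det _).1 (isUnit_Dmat n p r z hz)
  have hDj := (Matrix.isUnit_iff_isUnit_det _).1 (isUnit_Djmat n p r z hz j)
  have hsplit : Dmat n p r z = Djmat n p r z j + Matrix.vecMulVec (r j) (star (r j)) := by
    simp [Djmat]
  have h1 : Dmat n p r z *ᵥ ((Djmat n p r z j)⁻¹ *ᵥ r j) = (1 + quadRD n p r z j) • r j := by
    rw [quadRD_eq, add_smul, one_smul, hsplit, Matrix.add_mulVec, Matrix.mulVec_mulVec,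
      Matrix.mul_nonsing_inv _ hDj, Matrix.one_mulVec, Matrix.vecMulVec_mulVec]
    simp
  have h2 : (Djmat n p r z j)⁻¹ *ᵥ r j
      = (1 + quadRD n p r z j) • ((Dmat n p r z)⁻¹ *ᵥ r j) := by
    rw [← Matrix.mulVec_smul, ← h1, Matrix.mulVec_mulVec, Matrix.nonsing_inv_mul _ hD,
      Matrix.one_mulVec]
  have h3 := quadRD_eq n p r z j
  rw [h2, dotProduct_smul, smul_eq_mul] at h3
  linear_combination h3

lemma Dmat_eq (n p : ℕ) (r : Fin p → Fin n → ℂ) (z : ℂ) :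
    Dmat n p r z = Ymat n p r * (Ymat n p r)ᴴ - z • 1 := by
  rw [Dmat]
  congr 1
  ext s t
  simp [Matrix.sum_apply, Matrix.mul_apply, Ymat, Matrix.vecMulVec_apply]

lemma gram_inv (n p : ℕ) (r : Fin p → Fin n → ℂ) (z : ℂ) (hz : 0 < z.im) :
    ((Ymat n p r)ᴴ * Ymat n p r - z • 1)⁻¹
      = (-z⁻¹) • (1 - (Ymat n p r)ᴴ * (Dmat n p r z)⁻¹ * Ymat n p r) := by
  have hz0 : z ≠ 0 := by rintro rfl; simp at hz
  have hD := (Matrix.isUnit_iff_isUnit_det _).1 (isUnit_Dmat n p r z hz)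
  apply Matrix.inv_eq_right_inv
  have hY : ((Ymat n p r)ᴴ * Ymat n p r - z • 1) * (Ymat n p r)ᴴ
      = (Ymat n p r)ᴴ * Dmat n p r z := by
    rw [Dmat_eq, Matrix.sub_mul, Matrix.mul_sub]
    simp [Matrix.mul_assoc]
  rw [Matrix.mul_smul, Matrix.mul_sub, Matrix.mul_one, ← Matrix.mul_assoc, ← Matrix.mul_assoc,
    hY, Matrix.mul_assoc _ (Dmat n p r z), Matrix.mul_nonsing_inv _ hD, Matrix.mul_one,
    sub_sub_cancel_left, smul_neg, neg_smul, neg_neg, smul_smul, inv_mul_cancel₀ hz0, one_smul]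

lemma gram_diag (n p : ℕ) (r : Fin p → Fin n → ℂ) (B : Matrix (Fin n) (Fin n) ℂ) (j : Fin p) :
    ((Ymat n p r)ᴴ * B * Ymat n p r) j j = star (r j) ⬝ᵥ (B *ᵥ r j) := by
  rw [Matrix.mul_assoc]
  simp [Matrix.mul_apply, Ymat, dotProduct, Matrix.mulVec]

/-- (0521(28)) of the paper, after Silverstein (1995):
for any vectors `r_1, …, r_p ∈ ℂⁿ` and any `z` with `Im z > 0`, the matrices
`D = ∑_j r_j r_j* − z I_n` and `D_j = D − r_j r_j*` are invertible, the denominators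
`1 + r_j* D_j⁻¹ r_j` are nonzero, and
`p⁻¹ tr((Y*Y − z I_p)⁻¹) = −(pz)⁻¹ ∑_j (1 + r_j* D_j⁻¹ r_j)⁻¹`. -/
theorem stieltjes_transform_identity
    (n p : ℕ) (hn : 1 ≤ n) (hp : 1 ≤ p)
    (r : Fin p → Fin n → ℂ) (z : ℂ) (hz : 0 < z.im) :
    IsUnit (Dmat n p r z) ∧
    (∀ j : Fin p, IsUnit (Djmat n p r z j)) ∧
    (∀ j : Fin p, 1 + quadRD n p r z j ≠ 0) ∧
    (1 / (p : ℂ)) * Matrix.trace (((Ymat n p r)ᴴ * Ymat n p r - z • 1)⁻¹) =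
      -(1 / ((p : ℂ) * z)) * ∑ j : Fin p, (1 + quadRD n p r z j)⁻¹ := by
  have hkey := key_mul n p r z hz
  refine ⟨isUnit_Dmat n p r z hz, isUnit_Djmat n p r z hz,
    fun j => right_ne_zero_of_mul_eq_one (hkey j), ?_⟩
  have hsum : ∑ j : Fin p, (1 + quadRD n p r z j)⁻¹
      = Matrix.trace (1 - (Ymat n p r)ᴴ * (Dmat n p r z)⁻¹ * Ymat n p r) := by
    rw [Matrix.trace]
    refine Finset.sum_congr rfl fun j _ => ?_
    rw [Matrix.diag_apply, Matrix.sub_apply, Matrix.one_apply_eq, gram_diag]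
    exact (eq_inv_of_mul_eq_one_left (hkey j)).symm
  rw [hsum, gram_inv n p r z hz, Matrix.trace_smul, smul_eq_mul, one_div, one_div, mul_inv]
  ring
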